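/- arXiv:1107.3672 — 2 statements merged into one kernel-verified Lean document; each statement's English description precedes it below -/
import Mathlib

section
/- Let r, d, s, π be integers with r ≥ 4, r−1 ≤ s ≤ 2r−4, 0 ≤ π ≤ π₀ := s−r+1, and d ≥ (2s+1)(s+1). Set π₀' := (s+1)−r+1. Then h_{r,d,s+1,π₀'} > h_{r,d,s,π}, i.e. h_{r,d,s+1,π₀'}(i) ≥ h_{r,d,s,π}(i) for every i ≥ 1 with strict inequality for some i; consequently G*(r,d,s+1,π₀',0) < G*(r,d,s,π, −binom(π₀−π+1, 2)). -/
/-!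
Write `m = (d-1)/s` and `m' = (d-1)/(s+1)`. The bound `d ≥ (2s+1)(s+1)` forces `m' + 2 ≤ m`.
For `i ≤ m'` both functions are given by their linear formulas, which agree for `i ≤ π₀-π+1`,
after which the one for `s+1` grows faster. At `i = m'+1` the function for `s+1` is at least
`d - π₀'`, while the one for `s` is at most `d - s`, and `π₀' < s`: this is where strictness occurs.
For `i ≥ m'+2` the function for `s+1` equals `d`, the largest possible value.

The inequality for `G*` follows by summation, because
`∑_{i ≥ 1} (d - h_{r,d,s,π}(i)) = G*(r,d,s,π,-binom(π₀-π+1,2))` (`sum_sub_hF`); for `s+1` and `π₀'`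
the binomial correction is zero.
-/

open scoped BigOperators

noncomputable section

/-- The homogeneous coordinate ring of `ℙ^{n-1}` over `ℂ`: polynomials in `n` variables. -/
abbrev MPoly (n : ℕ) : Type := MvPolynomial (Fin n) ℂ

/-- An ideal is homogeneous if it contains all homogeneous components of its members. -/
def IsHomogIdeal {n : ℕ} (I : Ideal (MPoly n)) : Prop :=
  ∀ f ∈ I, ∀ k : ℕ, MvPolynomial.homogeneousComponent k f ∈ I

/-- The degree-`k` graded piece of the homogeneous coordinate ring of the subscheme `V(I)`. -/
def degQ {n : ℕ} (I : Ideal (MPoly n)) (k : ℕ) : Submodule ℂ (MPoly n ⧸ I) :=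
  (MvPolynomial.homogeneousSubmodule (Fin n) ℂ k).map (Ideal.Quotient.mkₐ ℂ I).toLinearMap

/-- The graded pieces, indexed by `ℤ` (zero in negative degrees). -/
def degQZ {n : ℕ} (I : Ideal (MPoly n)) (t : ℤ) : Submodule ℂ (MPoly n ⧸ I) :=
  if 0 ≤ t then degQ I t.toNat else ⊥

/-- The Hilbert function of the closed subscheme `V(I) ⊆ ℙ^{n-1}`. -/
def hilbNat {n : ℕ} (I : Ideal (MPoly n)) (t : ℤ) : ℕ :=
  Module.finrank ℂ (degQZ I t)

/-- The Hilbert function, as an integer-valued function. -/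
def hilbZ {n : ℕ} (I : Ideal (MPoly n)) (t : ℤ) : ℤ := (hilbNat I t : ℤ)

/-- The irrelevant maximal ideal `(x_0, …, x_{n-1})`. -/
def mId (n : ℕ) : Ideal (MPoly n) := Ideal.span (Set.range MvPolynomial.X)

/-- The space of degree-`t` graded module homomorphisms `m^k → R/I`. -/
def gradedHomSub {n : ℕ} (I : Ideal (MPoly n)) (k : ℕ) (t : ℤ) :
    Submodule ℂ ((mId n ^ k : Ideal (MPoly n)) →ₗ[MPoly n] (MPoly n ⧸ I)) where
  carrier := {φ | ∀ (j : ℕ) (f : MPoly n) (hf : f ∈ mId n ^ k),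
    f ∈ MvPolynomial.homogeneousSubmodule (Fin n) ℂ j → φ ⟨f, hf⟩ ∈ degQZ I ((j : ℤ) + t)}
  add_mem' := by
    intro a b ha hb j f hf hj
    simpa using Submodule.add_mem _ (ha j f hf hj) (hb j f hf hj)
  zero_mem' := by
    intro j f hf hj
    simpa using Submodule.zero_mem _
  smul_mem' := by
    intro c φ hφ j f hf hj
    simpa using Submodule.smul_mem _ c (hφ j f hf hj)

/-- `h⁰(X, 𝒪_X(t))` for `X = V(I)`: the stable value of the dimensions of the graded Hom
modules `Hom(m^k, R/I)_t` (the Deligne formula for twisted global sections). -/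
def h0Nat {n : ℕ} (I : Ideal (MPoly n)) (t : ℤ) : ℕ :=
  ⨆ k : ℕ, Module.finrank ℂ (gradedHomSub I k t)

/-- `h¹(ℙ^{n-1}, 𝓘_X(t)) = h⁰(X, 𝒪_X(t)) − h_X(t)` (valid for the saturated ideal of `X`). -/
def h1INat {n : ℕ} (I : Ideal (MPoly n)) (t : ℤ) : ℕ := h0Nat I t - hilbNat I t

/-- The dimension over `ℂ` of the Hartshorne–Rao module `M(X) = ⊕_t H¹(ℙ, 𝓘_X(t))`. -/
def raoDim {n : ℕ} (I : Ideal (MPoly n)) : ℕ := ∑ᶠ t : ℤ, h1INat I t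

/-- Arithmetically Cohen–Macaulay (for an integral curve): the Hartshorne–Rao module vanishes. -/
def IsACM {n : ℕ} (I : Ideal (MPoly n)) : Prop := ∀ t : ℤ, h0Nat I t = hilbNat I t

/-- Saturation of an ideal with respect to the irrelevant maximal ideal. -/
def satIdeal {n : ℕ} (I : Ideal (MPoly n)) : Ideal (MPoly n) where
  carrier := {f | ∃ k : ℕ, ∀ j : Fin n, MvPolynomial.X j ^ k * f ∈ I}
  zero_mem' := ⟨0, fun j => by simpa using I.zero_mem⟩
  add_mem' := by
    rintro f g ⟨k, hk⟩ ⟨l, hl⟩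
    refine ⟨k + l, fun j => ?_⟩
    have h1 : MvPolynomial.X (R := ℂ) j ^ (k + l) * (f + g)
        = MvPolynomial.X j ^ l * (MvPolynomial.X j ^ k * f)
          + MvPolynomial.X j ^ k * (MvPolynomial.X j ^ l * g) := by ring
    rw [h1]
    exact I.add_mem (I.mul_mem_left _ (hk j)) (I.mul_mem_left _ (hl j))
  smul_mem' := by
    rintro c f ⟨k, hk⟩
    refine ⟨k, fun j => ?_⟩
    have h1 : MvPolynomial.X (R := ℂ) j ^ k * (c • f) = c * (MvPolynomial.X j ^ k * f) := by
      rw [smul_eq_mul]; ring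
    rw [h1]
    exact I.mul_mem_left _ (hk j)

/-- The hyperplane section of `V(I)` by the hyperplane `{ℓ = 0}`, as a closed subscheme
(its saturated homogeneous ideal). -/
def sect {n : ℕ} (I : Ideal (MPoly n)) (ℓ : MPoly n) : Ideal (MPoly n) :=
  satIdeal (I ⊔ Ideal.span {ℓ})

/-- A property `P` holds for a *general* `k`-tuple of linear forms (hyperplanes): it holds on a
nonempty Zariski-open subset of the space of coefficients. -/
def GenericForms (n k : ℕ) (P : (Fin k → MPoly n) → Prop) : Prop :=
  ∃ Q : MvPolynomial (Fin k × Fin n) ℂ, Q ≠ 0 ∧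
    ∀ c : Fin k → Fin n → ℂ, MvPolynomial.eval (fun p => c p.1 p.2) Q ≠ 0 →
      P fun t => ∑ j : Fin n, MvPolynomial.C (c t j) * MvPolynomial.X j

/-- `V(I) ⊆ ℙ^{n-1}` is nondegenerate: contained in no hyperplane. -/
def Nondeg {n : ℕ} (I : Ideal (MPoly n)) : Prop :=
  ∀ f ∈ MvPolynomial.homogeneousSubmodule (Fin n) ℂ 1, f ∈ I → f = 0

/-- `V(I)` is an integral curve: `I` homogeneous prime, with cone of Krull dimension 2. -/
def IsCurve {n : ℕ} (I : Ideal (MPoly n)) : Prop :=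
  IsHomogIdeal I ∧ I.IsPrime ∧ ringKrullDim (MPoly n ⧸ I) = 2

/-- `V(I)` is an integral surface: `I` homogeneous prime, with cone of Krull dimension 3. -/
def IsSurface {n : ℕ} (I : Ideal (MPoly n)) : Prop :=
  IsHomogIdeal I ∧ I.IsPrime ∧ ringKrullDim (MPoly n ⧸ I) = 3

/-- The curve `V(I)` has degree `d` and arithmetic genus `g`: its Hilbert polynomial is
`d·t + 1 − g`. -/
def CurveInv {n : ℕ} (I : Ideal (MPoly n)) (d g : ℤ) : Prop :=
  ∃ N : ℤ, ∀ t : ℤ, N ≤ t → hilbZ I t = d * t + 1 - g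

/-- The surface `V(I)` has degree `s`, sectional genus `π` and arithmetic genus `pa`:
its Hilbert polynomial is `s·choose(t+1, 2) + (1 − π)·t + 1 + pa`. -/
def SurfInv {n : ℕ} (I : Ideal (MPoly n)) (s π pa : ℤ) : Prop :=
  ∃ N : ℤ, ∀ t : ℤ, N ≤ t → hilbZ I t = s * (t * (t + 1) / 2) + (1 - π) * t + 1 + pa

/-- `V(IC)` is not contained in any integral surface of degree `< s`. -/
def NotInSurfDegLT {n : ℕ} (IC : Ideal (MPoly n)) (s : ℤ) : Prop :=
  ∀ (T : Ideal (MPoly n)) (s' π' pa' : ℤ), IsSurface T → SurfInv T s' π' pa' → s' < s →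
    ¬ T ≤ IC

/-- `V(IC)` is not contained in any integral surface of degree `s` with sectional genus `> π`. -/
def NotInSurfSecGT {n : ℕ} (IC : Ideal (MPoly n)) (s π : ℤ) : Prop :=
  ∀ (T : Ideal (MPoly n)) (π' pa' : ℤ), IsSurface T → SurfInv T s π' pa' → π < π' →
    ¬ T ≤ IC

/-- `V(IC)` is not contained in any integral surface of degree `s` with arithmetic genus `< p`. -/
def NotInSurfGenLT {n : ℕ} (IC : Ideal (MPoly n)) (s p : ℤ) : Prop :=
  ∀ (T : Ideal (MPoly n)) (π' pa' : ℤ), IsSurface T → SurfInv T s π' pa' → pa' < p →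
    ¬ T ≤ IC

/-- `binom2 z = z.choose 2` for integers. -/
def binom2 (z : ℤ) : ℤ := z * (z - 1) / 2

/-- The bound `G*(r,d,s,π,p)` of Di Gennaro–Franco, with `m = (d-1)/s`, `ε = (d-1) % s`. -/
def Gstar (r d s π p : ℤ) : ℤ :=
  binom2 ((d - 1) / s) * s + ((d - 1) / s) * ((d - 1) % s + π) - p
    + max 0 ((2 * π - (s - 1 - (d - 1) % s)) / 2)

/-- The numerical function `h_{r,d,s,π}`. -/
def hF (r d s π : ℤ) (i : ℤ) : ℤ :=
  if 1 ≤ i ∧ i ≤ (d - 1) / s then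
    1 - π + i * s - max 0 ((s - r + 1) - π - i + 1)
  else if i = (d - 1) / s + 1 then
    d - max 0 ((2 * π - (s - 1 - (d - 1) % s)) / 2)
  else if (d - 1) / s + 2 ≤ i then d
  else 0

/-- The threshold `d₀(r)`. -/
def d0 (r : ℤ) : ℤ :=
  if r ≤ 6 then 16 * (r - 2) * (2 * r - 3)
  else if r ≤ 11 then 8 * (r - 2) ^ 3
  else 2 ^ (r.toNat + 1)

end
noncomputable section

/-- The affine cone of `V(I)`: common zeroes of the elements of `I`. -/
def zeroCone {n : ℕ} (I : Ideal (MPoly n)) : Set (Fin n → ℂ) :=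
  {a | ∀ f ∈ I, MvPolynomial.eval a f = 0}

/-- Jacobian-criterion smoothness: at every nonzero point of the affine cone (of dimension `c`)
the gradients of the equations span a subspace of dimension `n - c`. -/
def IsSmooth {n : ℕ} (I : Ideal (MPoly n)) (c : ℕ) : Prop :=
  ∀ a ∈ zeroCone I, a ≠ 0 →
    Module.finrank ℂ (Submodule.span ℂ
      {g : Fin n → ℂ | ∃ f ∈ I, g = fun j => MvPolynomial.eval a (MvPolynomial.pderiv j f)})
      = n - c

/-- Castelnuovo's bound for the genus of a nondegenerate integral curve of degree `d`
in `ℙ^R`. -/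
def castelG (R d : ℤ) : ℤ :=
  binom2 ((d - 1) / (R - 1)) * (R - 1) + ((d - 1) / (R - 1)) * ((d - 1) % (R - 1))

/-- The ideal of the projective cone (from `ℙ^{n-1}` to `ℙ^n`) over `V(I)`. -/
def coneIdeal {n : ℕ} (I : Ideal (MPoly n)) : Ideal (MPoly (n + 1)) :=
  Ideal.map (MvPolynomial.rename (Fin.castSucc : Fin n → Fin (n + 1))) I

/-- `J` is the (saturated homogeneous) ideal of a line in `ℙ^{n-1}`: it is generated by
`n - 2` linearly independent linear forms. -/
def IsLineIdeal {n : ℕ} (J : Ideal (MPoly n)) : Prop :=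
  ∃ V : Submodule ℂ (MPoly n), V ≤ MvPolynomial.homogeneousSubmodule (Fin n) ℂ 1 ∧
    Module.finrank ℂ V = n - 2 ∧ J = Ideal.span (V : Set (MPoly n))

/-- `V(T) ⊆ ℙ^{n-1}` is a smooth rational normal scroll surface: a smooth nondegenerate
integral surface of minimal degree `n - 2` (with sectional and arithmetic genus `0`)
containing a line (which rules out the Veronese surface). -/
def IsSmoothRNScroll {n : ℕ} (T : Ideal (MPoly n)) : Prop :=
  IsSurface T ∧ Nondeg T ∧ IsSmooth T 3 ∧ SurfInv T ((n : ℤ) - 2) 0 0 ∧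
    ∃ J : Ideal (MPoly n), IsLineIdeal J ∧ T ≤ J

/-- The linear projection on points determined by the matrix `L`. -/
def projPt {nb ns : ℕ} (L : Fin ns → Fin nb → ℂ) (a : Fin nb → ℂ) : Fin ns → ℂ :=
  fun t => ∑ j, L t j * a j

/-- The substitution algebra homomorphism determined by the matrix `L` (pullback of the
linear projection `ℙ^{nb-1} ⇢ ℙ^{ns-1}`). -/
def substHom {nb ns : ℕ} (L : Fin ns → Fin nb → ℂ) : MPoly ns →ₐ[ℂ] MPoly nb :=
  MvPolynomial.aeval fun t => ∑ j, MvPolynomial.C (L t j) * MvPolynomial.X j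

/-- The linear projection given by `L` maps `V(I')` isomorphically onto `V(I)`: the center of
projection misses `V(I')`, `V(I)` is the image, and the projection is (projectively) bijective
from `V(I')` onto `V(I)`. -/
def IsIsoProjection {nb ns : ℕ} (L : Fin ns → Fin nb → ℂ)
    (I' : Ideal (MPoly nb)) (I : Ideal (MPoly ns)) : Prop :=
  I = I'.comap (substHom L) ∧
  (∀ a ∈ zeroCone I', a ≠ 0 → projPt L a ≠ 0) ∧
  (∀ a ∈ zeroCone I', ∀ b ∈ zeroCone I', a ≠ 0 → b ≠ 0 →
    (∃ c : ℂ, c ≠ 0 ∧ projPt L a = c • projPt L b) → ∃ c : ℂ, c ≠ 0 ∧ a = c • b) ∧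
  (∀ y ∈ zeroCone I, y ≠ 0 → ∃ a ∈ zeroCone I', a ≠ 0 ∧ ∃ c : ℂ, c ≠ 0 ∧ y = c • projPt L a)

/-- `t` bounds the Castelnuovo–Mumford regularity of the surface `V(I) ⊆ ℙ^{n-1}`:
for every `t' ≥ t`, `H^i(ℙ, 𝓘(t'-i)) = 0` for all `i ≥ 1`, expressed through the standard
inductive characterization by successive general hyperplane sections. -/
def IsRegBound {n : ℕ} (I : Ideal (MPoly n)) (t : ℤ) : Prop :=
  GenericForms n 2 fun L => ∀ t' : ℤ, t ≤ t' →
    h1INat I (t' - 1) = 0 ∧ h1INat (sect I (L 0)) (t' - 1) = 0 ∧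
      h1INat (sect (sect I (L 0)) (L 1)) (t' - 1) = 0

end

theorem two_mul_binom2 (z : ℤ) : 2 * binom2 z = z * (z - 1) := by
  have h : Even (z * (z - 1)) := by
    have := Int.even_mul_succ_self (z - 1)
    rwa [sub_add_cancel, mul_comm] at this
  exact Int.mul_ediv_cancel' h.two_dvd

theorem two_mul_sum_arith (a s : ℤ) (k : ℕ) :
    2 * ∑ i ∈ Finset.range k, (a - ((i : ℤ) + 1) * s) = 2 * k * a - k * (k + 1) * s := by
  induction k with
  | zero => simp
  | succ n ih => rw [Finset.sum_range_succ, mul_add, ih]; push_cast; ring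

theorem two_mul_sum_max (c k : ℕ) (hk : c ≤ k) :
    2 * ∑ i ∈ Finset.range k, max 0 ((c : ℤ) - i) = (c + 1) * c := by
  -- The summands are positive exactly for `i < c`; up to there the sum is arithmetic.
  have key : ∀ j : ℕ, j ≤ c →
      2 * ∑ i ∈ Finset.range j, max 0 ((c : ℤ) - i) = 2 * j * c - j * (j - 1) := by
    intro j
    induction j with
    | zero => simp
    | succ n ih =>
      intro hn
      rw [Finset.sum_range_succ, mul_add, ih (by omega), max_eq_right (by omega)]
      push_cast; ring
  induction k, hk using Nat.le_induction with
  | base => rw [key c le_rfl]; ring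
  | succ n hn ih => rw [Finset.sum_range_succ, mul_add, ih, max_eq_left (by omega)]; ring

/-- Put `m = (d-1)/s` and `π₀ = s-r+1`. Beyond `i = m + 1` the difference `d - h_{r,d,s,π}(i)`
vanishes, so the sum over any longer range computes `G*(r,d,s,π,-binom(π₀-π+1,2))`.
The hypothesis `π₀ - π ≤ m` makes the whole correction term `∑ max(0, π₀-π-i+1)`
fall inside `1 ≤ i ≤ m`. -/
theorem sum_sub_hF (r d s π : ℤ) (hs : 1 ≤ s) (hd : 1 ≤ d) (hc : 0 ≤ s - r + 1 - π)
    (hcm : s - r + 1 - π ≤ (d - 1) / s) (N : ℕ) (hN : (d - 1) / s + 1 ≤ N) :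
    ∑ i ∈ Finset.range N, (d - hF r d s π ((i : ℤ) + 1))
      = Gstar r d s π (-(binom2 (s - r + 1 - π + 1))) := by
  have hm0 : 0 ≤ (d - 1) / s := Int.ediv_nonneg (by omega) (by omega)
  obtain ⟨M, hM⟩ := Int.eq_ofNat_of_zero_le hm0
  obtain ⟨c, hcc⟩ := Int.eq_ofNat_of_zero_le hc
  have hdiv := Int.mul_ediv_add_emod (d - 1) s
  have hMN : M + 1 ≤ N := by omega
  have hcM : c ≤ M := by omega
  induction N, hMN using Nat.le_induction with
  | base =>
    rw [Finset.sum_range_succ]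
    have h1 : ∑ i ∈ Finset.range M, (d - hF r d s π ((i : ℤ) + 1))
        = ∑ i ∈ Finset.range M, ((d - 1 + π - ((i : ℤ) + 1) * s) + max 0 ((c : ℤ) - i)) := by
      refine Finset.sum_congr rfl fun i hi => ?_
      have hi' := Finset.mem_range.mp hi
      rw [hF, if_pos (by omega), show s - r + 1 - π - ((i : ℤ) + 1) + 1 = c - i by omega]
      ring
    rw [h1, Finset.sum_add_distrib]
    have h2 := two_mul_sum_arith (d - 1 + π) s M
    have h3 := two_mul_sum_max c M hcM
    have h4 : d - hF r d s π ((M : ℤ) + 1)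
        = max 0 ((2 * π - (s - 1 - (d - 1) % s)) / 2) := by
      rw [hF, if_neg (by omega), if_pos (by omega)]
      ring
    have h5 := two_mul_binom2 ((d - 1) / s)
    have h6 := two_mul_binom2 (s - r + 1 - π + 1)
    rw [h4, Gstar]
    rw [hM] at hdiv h5 ⊢
    rw [hcc] at h6 ⊢
    have h7 : d - 1 = s * M + (d - 1) % s := hdiv.symm
    generalize (d - 1) % s = e at *
    generalize max 0 ((2 * π - (s - 1 - e)) / 2) = x at *
    have h8 : d = s * M + e + 1 := by linarith
    subst h8
    refine mul_left_cancel₀ (two_ne_zero (α := ℤ)) ?_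
    linear_combination h2 + h3 - s * h5 - h6
  | succ n hn ih =>
    rw [Finset.sum_range_succ, ih (by omega), hF, if_neg (by omega), if_neg (by omega),
      if_pos (by omega)]
    ring

/-- Lemma 3.2(3).  If `d ≥ (2s+1)(s+1)` then
`h_{r,d,s+1,π₀'} > h_{r,d,s,π}` (where `π₀' = (s+1)-r+1`), and consequently
`G*(r,d,s+1,π₀',0) < G*(r,d,s,π,-binom(π₀-π+1,2))`. -/
theorem statement_10 (r d s π : ℤ) (hr : 4 ≤ r)
    (hs1 : r - 1 ≤ s) (hs2 : s ≤ 2 * r - 4)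
    (hπ1 : 0 ≤ π) (hπ2 : π ≤ s - r + 1)
    (hd : (2 * s + 1) * (s + 1) ≤ d) :
    (∀ i : ℤ, 1 ≤ i → hF r d s π i ≤ hF r d (s + 1) (s + 1 - r + 1) i) ∧
    (∃ i : ℤ, 1 ≤ i ∧ hF r d s π i < hF r d (s + 1) (s + 1 - r + 1) i) ∧
    Gstar r d (s + 1) (s + 1 - r + 1) 0
      < Gstar r d s π (-(binom2 (s - r + 1 - π + 1))) := by
  have hs : 1 ≤ s := by omega
  have hd1 : 2 * s * s + 3 * s ≤ d - 1 := by nlinarith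
  have hdpos : 1 ≤ d := by nlinarith
  have hdiv := Int.mul_ediv_add_emod (d - 1) s
  have he0 := Int.emod_nonneg (d - 1) (show s ≠ 0 by omega)
  have he1 := Int.emod_lt_of_pos (d - 1) (show 0 < s by omega)
  have hdiv' := Int.mul_ediv_add_emod (d - 1) (s + 1)
  have he0' := Int.emod_nonneg (d - 1) (show s + 1 ≠ 0 by omega)
  have he1' := Int.emod_lt_of_pos (d - 1) (show 0 < s + 1 by omega)
  have hm' : s ≤ (d - 1) / (s + 1) :=
    (Int.le_ediv_iff_mul_le (by omega)).mpr (by nlinarith)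
  -- Since `(d-1)/s - (d-1)/(s+1) > 2` as rationals, the two quotients differ by at least `2`.
  have hmm : (d - 1) / (s + 1) + 2 ≤ (d - 1) / s := by
    refine (Int.le_ediv_iff_mul_le (by omega)).mpr ?_
    have hm2 : 2 * s ≤ (d - 1) / (s + 1) :=
      (Int.le_ediv_iff_mul_le (by omega)).mpr (by nlinarith)
    nlinarith
  have hgap : ((d - 1) / (s + 1) + 1) * s + s ≤ (d - 1) / s * s := by nlinarith
  have hlt : hF r d s π ((d - 1) / (s + 1) + 1)
      < hF r d (s + 1) (s + 1 - r + 1) ((d - 1) / (s + 1) + 1) := by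
    rw [hF, if_pos (by omega), hF, if_neg (by omega), if_pos rfl, lt_sub_iff_add_lt]
    rw [mul_comm] at hdiv
    generalize ((d - 1) / (s + 1) + 1) * s = u at *
    generalize (d - 1) / s * s = v at *
    omega
  have hle : ∀ i : ℤ, 1 ≤ i → hF r d s π i ≤ hF r d (s + 1) (s + 1 - r + 1) i := by
    intro i hi
    rcases lt_trichotomy i ((d - 1) / (s + 1) + 1) with h | rfl | h
    · rw [hF, if_pos (by omega), hF, if_pos (by omega), mul_add]
      generalize i * s = u
      omega
    · exact hlt.le
    · -- Here the right-hand side is `d`, the maximal value.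
      rw [hF.eq_def r d (s + 1), if_neg (by omega), if_neg (by omega), if_pos (by omega), hF]
      split_ifs with h1 h2 h3
      · have : i * s ≤ (d - 1) / s * s := by nlinarith
        rw [mul_comm] at hdiv
        generalize i * s = u at *
        generalize (d - 1) / s * s = v at *
        omega
      · omega
      · exact le_rfl
      · omega
  refine ⟨hle, ⟨_, by omega, hlt⟩, ?_⟩
  obtain ⟨M, hM⟩ := Int.eq_ofNat_of_zero_le (show 0 ≤ (d - 1) / s by omega)
  obtain ⟨M', hM'⟩ := Int.eq_ofNat_of_zero_le (show 0 ≤ (d - 1) / (s + 1) by omega)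
  have hS := sum_sub_hF r d s π hs hdpos (by omega) (by omega) (M + 1) (by push_cast; omega)
  have hS' := sum_sub_hF r d (s + 1) (s + 1 - r + 1) (by omega) hdpos (by omega) (by omega)
    (M + 1) (by push_cast; omega)
  have hb : -(binom2 (s + 1 - r + 1 - (s + 1 - r + 1) + 1)) = 0 := by
    simp [binom2]
  rw [hb] at hS'
  rw [← hS, ← hS']
  refine Finset.sum_lt_sum (fun i _ => ?_) ⟨M', Finset.mem_range.mpr (by omega), ?_⟩
  · have := hle ((i : ℤ) + 1) (by omega)
    omega
  · rw [hM'] at hlt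
    omega
end

section
/- Let S ⊂ P^r be an irreducible, reduced, nondegenerate projective surface of degree s and arithmetic genus p_a(S). Let Σ be the general hyperplane section of S and H the general hyperplane section of Σ. For each integer i set δ_i := Δh_Σ(i) − h_H(i) and μ_i := Δh_S(i) − h_Σ(i). Then p_a(S) = ∑_{i=1}^{∞} (i−1)(s − h_H(i)) − ∑_{i=1}^{∞} (i−1)δ_i + ∑_{i=1}^{∞} μ_i (all sums have finitely many nonzero terms). -/
/-!
Write `R` for the polynomial ring, `A = R/IS`, and let `ℓ₁`, `ℓ₂` be general linear forms.

Saturation changes a homogeneous ideal only in finitely many degrees (`exists_sat_tail`), and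
`sat(sat(J) + K) = sat(J + K)`, so in large degrees `h_Σ` and `h_H` are the Hilbert functions of
`A/ℓ₁` and `A/(ℓ₁, ℓ₂)`.  A nonzero `ℓ₁` is a nonzerodivisor on the domain `A` by nondegeneracy, hence
`h_Σ(i) = Δh_S(i)` for large `i`.  Once `h_H(i) = s` is known for large `i`, all three sums are
finite and summation by parts gives `p_a(S) + 1 - h_S(0) = p_a(S)` (`numeric_identity`).

The remaining point is that `h_H(i) = s` for large `i` on a nonempty Zariski-open set of *pairs*
`(ℓ₁, ℓ₂)` (`exists_generic_twoSect`).  Right exactness of multiplication by `ℓ₂` gives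
`dim (A/(ℓ₁, ℓ₂))_i ≥ Δ²h_S(i) = s` for large `i`.  For the upper bound, avoiding associated primes
yields one triple `(m₁, m₂, ℓ₃)` of successive nonzerodivisors up to finite length
(`exists_good_lin`).  For it, in one large degree `d`, `dim (A/(m₁, m₂))_d = s` and
`(A/(m₁, m₂, ℓ₃))_d = 0`.  Both are upper semicontinuous conditions in a single degree
(`exists_semicontinuous`), so for `(ℓ₁, ℓ₂)` in an open set `dim (A/(ℓ₁, ℓ₂))_d ≤ s` and
`(A/(ℓ₁, ℓ₂, ℓ₃))_d = 0`.  The latter makes multiplication by `ℓ₃` surjective on `A/(ℓ₁, ℓ₂)` into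
degrees `≥ d`, so the Hilbert function of `A/(ℓ₁, ℓ₂)` is nonincreasing from there on and stays
at most `s`.
-/

open scoped BigOperators

open MvPolynomial

/-- The linear form with coefficient vector `c`. -/
noncomputable def lin {n : ℕ} (c : Fin n → ℂ) : MPoly n := ∑ j : Fin n, C (c j) * X j

theorem lin_isHomogeneous {n : ℕ} (c : Fin n → ℂ) : (lin c).IsHomogeneous 1 := by
  refine IsHomogeneous.sum _ _ _ fun j _ => ?_
  simpa using (isHomogeneous_C (Fin n) (c j)).mul (isHomogeneous_X ℂ j)

/-! ### Homogeneous ideals and linear forms -/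

theorem homogeneousComponent_linear_mul {n : ℕ} {ℓ : MPoly n} (hℓ : ℓ.IsHomogeneous 1)
    (a : MPoly n) (k : ℕ) :
    homogeneousComponent (k + 1) (ℓ * a) = ℓ * homogeneousComponent k a := by
  conv_lhs => rw [← sum_homogeneousComponent a, Finset.mul_sum, map_sum]
  have h : ∀ i, homogeneousComponent (k + 1) (ℓ * homogeneousComponent i a)
      = if k = i then ℓ * homogeneousComponent i a else 0 := by
    intro i
    rw [homogeneousComponent_of_mem (m := k + 1) (n := i + 1)]
    · simp
    · rw [mem_homogeneousSubmodule, add_comm]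
      exact hℓ.mul (homogeneousComponent_isHomogeneous i a)
  simp only [h]
  rw [Finset.sum_ite_eq]
  split_ifs with hk
  · rfl
  · rw [homogeneousComponent_eq_zero, mul_zero]
    simp at hk
    omega

theorem homogeneousComponent_zero_linear_mul {n : ℕ} {ℓ : MPoly n} (hℓ : ℓ.IsHomogeneous 1)
    (a : MPoly n) : homogeneousComponent 0 (ℓ * a) = 0 := by
  have h : coeff 0 ℓ = 0 := hℓ.coeff_eq_zero (by simp)
  rw [homogeneousComponent_zero, ← constantCoeff_eq, map_mul, constantCoeff_eq, h]
  simp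

theorem IsHomogIdeal.sup_span {n : ℕ} {J : Ideal (MPoly n)} (hJ : IsHomogIdeal J) {ℓ : MPoly n}
    (hℓ : ℓ.IsHomogeneous 1) : IsHomogIdeal (J ⊔ Ideal.span {ℓ}) := by
  intro f hf k
  obtain ⟨g, hg, h, hh, rfl⟩ := Submodule.mem_sup.1 hf
  obtain ⟨a, rfl⟩ := Ideal.mem_span_singleton.1 hh
  rw [map_add]
  refine add_mem (Ideal.mem_sup_left (hJ g hg k)) (Ideal.mem_sup_right ?_)
  rcases k with _ | k
  · rw [homogeneousComponent_zero_linear_mul hℓ]; exact zero_mem _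
  · rw [homogeneousComponent_linear_mul hℓ]
    exact Ideal.mul_mem_right _ _ (Ideal.mem_span_singleton_self ℓ)

/-- In a sum of a homogeneous ideal and a linear form, homogeneous elements decompose
homogeneously. -/
theorem exists_decomp {n : ℕ} {J : Ideal (MPoly n)} (hJ : IsHomogIdeal J) {ℓ : MPoly n}
    (hℓ : ℓ.IsHomogeneous 1) {k : ℕ} {f : MPoly n} (hf : f.IsHomogeneous (k + 1))
    (hfJ : f ∈ J ⊔ Ideal.span {ℓ}) :
    ∃ g ∈ J, g.IsHomogeneous (k + 1) ∧ ∃ a : MPoly n, a.IsHomogeneous k ∧ f = g + ℓ * a := by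
  obtain ⟨g, hg, h, hh, rfl⟩ := Submodule.mem_sup.1 hfJ
  obtain ⟨a, rfl⟩ := Ideal.mem_span_singleton.1 hh
  refine ⟨homogeneousComponent (k + 1) g, hJ g hg _, homogeneousComponent_isHomogeneous _ _,
    homogeneousComponent k a, homogeneousComponent_isHomogeneous _ _, ?_⟩
  rw [← homogeneousComponent_linear_mul hℓ, ← map_add]
  exact (homogeneousComponent_eq_self hf).symm

/-! ### Hilbert functions -/

instance homogeneousSubmodule_finite (n k : ℕ) :
    Module.Finite ℂ (homogeneousSubmodule (Fin n) ℂ k) :=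
  Module.Finite.iff_fg.2 (homogeneousSubmodule_fg (Fin n) ℂ k)

instance degQ_finite {n : ℕ} (I : Ideal (MPoly n)) (k : ℕ) : Module.Finite ℂ (degQ I k) :=
  Module.Finite.iff_fg.2 ((homogeneousSubmodule_fg (Fin n) ℂ k).map _)

theorem hilbNat_natCast {n : ℕ} (I : Ideal (MPoly n)) (k : ℕ) :
    hilbNat I (k : ℤ) = Module.finrank ℂ (degQ I k) := by
  have h : degQZ I (k : ℤ) = degQ I k := by simp [degQZ]
  rw [hilbNat, h]

theorem mem_degQ {n : ℕ} {I : Ideal (MPoly n)} {k : ℕ} {x : MPoly n ⧸ I} :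
    x ∈ degQ I k ↔ ∃ f : MPoly n, f.IsHomogeneous k ∧ Ideal.Quotient.mk I f = x := by
  simp [degQ, Submodule.mem_map]

/-- Multiplication by `ℓ` and reduction modulo `ℓ` give the right exact sequence
`(R/J)_k → (R/J)_{k+1} → (R/(J, ℓ))_{k+1} → 0`, which bounds the Hilbert function of `R/(J, ℓ)`
from below, with equality when the first map is injective. -/
theorem finrank_sup_span {n : ℕ} {J : Ideal (MPoly n)} (hJ : IsHomogIdeal J) {ℓ : MPoly n}
    (hℓ : ℓ.IsHomogeneous 1) (k : ℕ) :
    Module.finrank ℂ (degQ J (k + 1)) ≤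
        Module.finrank ℂ (degQ (J ⊔ Ideal.span {ℓ}) (k + 1)) + Module.finrank ℂ (degQ J k) ∧
    ((∀ f : MPoly n, f.IsHomogeneous k → ℓ * f ∈ J → f ∈ J) →
      Module.finrank ℂ (degQ J (k + 1)) =
        Module.finrank ℂ (degQ (J ⊔ Ideal.span {ℓ}) (k + 1))
          + Module.finrank ℂ (degQ J k)) := by
  set I := J ⊔ Ideal.span {ℓ} with hI
  have hJI : J ≤ I := le_sup_left
  let g₀ : (MPoly n ⧸ J) →ₗ[ℂ] (MPoly n ⧸ I) := (Ideal.Quotient.factorₐ ℂ hJI).toLinearMap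
  let m₀ : (MPoly n ⧸ J) →ₗ[ℂ] (MPoly n ⧸ J) := LinearMap.mulLeft ℂ (Ideal.Quotient.mk J ℓ)
  let g : degQ J (k + 1) →ₗ[ℂ] (MPoly n ⧸ I) := g₀ ∘ₗ (degQ J (k + 1)).subtype
  let m : degQ J k →ₗ[ℂ] degQ J (k + 1) := m₀.restrict (by
    intro x hx
    obtain ⟨f, hf, rfl⟩ := mem_degQ.1 hx
    refine mem_degQ.2 ⟨ℓ * f, ?_, by simp [m₀]⟩
    rw [add_comm]
    exact hℓ.mul hf)
  have hrange : LinearMap.range g = degQ I (k + 1) := by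
    ext y
    constructor
    · rintro ⟨⟨x, hx⟩, rfl⟩
      obtain ⟨f, hf, rfl⟩ := mem_degQ.1 hx
      exact mem_degQ.2 ⟨f, hf, rfl⟩
    · intro hy
      obtain ⟨f, hf, rfl⟩ := mem_degQ.1 hy
      exact ⟨⟨Ideal.Quotient.mk J f, mem_degQ.2 ⟨f, hf, rfl⟩⟩, rfl⟩
  have hker : LinearMap.ker g = LinearMap.range m := by
    ext ⟨y, hy⟩
    obtain ⟨f, hf, rfl⟩ := mem_degQ.1 hy
    constructor
    · intro h
      have h' : Ideal.Quotient.mk I f = 0 := h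
      obtain ⟨p, hp, -, a, ha, rfl⟩ := exists_decomp hJ hℓ hf (Ideal.Quotient.eq_zero_iff_mem.1 h')
      refine ⟨⟨Ideal.Quotient.mk J a, mem_degQ.2 ⟨a, ha, rfl⟩⟩, Subtype.ext ?_⟩
      change Ideal.Quotient.mk J ℓ * Ideal.Quotient.mk J a = Ideal.Quotient.mk J (p + ℓ * a)
      rw [map_add, Ideal.Quotient.eq_zero_iff_mem.2 hp, zero_add, map_mul]
    · rintro ⟨⟨x, hx⟩, hxy⟩
      obtain ⟨a, ha, rfl⟩ := mem_degQ.1 hx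
      have h1 : Ideal.Quotient.mk J ℓ * Ideal.Quotient.mk J a = Ideal.Quotient.mk J f :=
        congrArg Subtype.val hxy
      rw [← map_mul, Ideal.Quotient.eq] at h1
      have h2 : f ∈ I := by
        have : f = ℓ * a - (ℓ * a - f) := by ring
        rw [this]
        exact sub_mem (Ideal.mul_mem_right _ _
          (Ideal.mem_sup_right (Ideal.mem_span_singleton_self ℓ))) (hJI h1)
      exact Ideal.Quotient.eq_zero_iff_mem.2 h2
  have hrn := LinearMap.finrank_range_add_finrank_ker g
  rw [hrange, hker] at hrn
  refine ⟨?_, fun hinj => ?_⟩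
  · have := LinearMap.finrank_range_le m
    omega
  · have hm : Function.Injective m := by
      rw [injective_iff_map_eq_zero]
      rintro ⟨x, hx⟩ h
      obtain ⟨a, ha, rfl⟩ := mem_degQ.1 hx
      have h1 : Ideal.Quotient.mk J ℓ * Ideal.Quotient.mk J a = 0 := congrArg Subtype.val h
      rw [← map_mul, Ideal.Quotient.eq_zero_iff_mem] at h1
      exact Subtype.ext (Ideal.Quotient.eq_zero_iff_mem.2 (hinj a ha h1))
    have := LinearMap.finrank_range_of_inj hm
    omega

theorem degQ_eq_of_forall {n : ℕ} {I J : Ideal (MPoly n)} {k : ℕ} (hIJ : I ≤ J)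
    (h : ∀ f : MPoly n, f.IsHomogeneous k → f ∈ J → f ∈ I) :
    Module.finrank ℂ (degQ I k) = Module.finrank ℂ (degQ J k) := by
  let g₀ : (MPoly n ⧸ I) →ₗ[ℂ] (MPoly n ⧸ J) := (Ideal.Quotient.factorₐ ℂ hIJ).toLinearMap
  let g : degQ I k →ₗ[ℂ] degQ J k := g₀.restrict (by
    intro x hx
    obtain ⟨f, hf, rfl⟩ := mem_degQ.1 hx
    exact mem_degQ.2 ⟨f, hf, rfl⟩)
  refine (LinearEquiv.ofBijective g ⟨?_, ?_⟩).finrank_eq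
  · rw [injective_iff_map_eq_zero]
    rintro ⟨x, hx⟩ hgx
    obtain ⟨f, hf, rfl⟩ := mem_degQ.1 hx
    have h1 : Ideal.Quotient.mk J f = 0 := congrArg Subtype.val hgx
    exact Subtype.ext (Ideal.Quotient.eq_zero_iff_mem.2
      (h f hf (Ideal.Quotient.eq_zero_iff_mem.1 h1)))
  · rintro ⟨y, hy⟩
    obtain ⟨f, hf, rfl⟩ := mem_degQ.1 hy
    exact ⟨⟨Ideal.Quotient.mk I f, mem_degQ.2 ⟨f, hf, rfl⟩⟩, rfl⟩

theorem finrank_degQ_zero {n : ℕ} {I : Ideal (MPoly n)} (hI : I ≠ ⊤) :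
    Module.finrank ℂ (degQ I 0) = 1 := by
  have hC : ∀ c : ℂ, Ideal.Quotient.mk I (C c) = c • (1 : MPoly n ⧸ I) := by
    intro c
    have := map_smul (Ideal.Quotient.mkₐ ℂ I).toLinearMap c (1 : MPoly n)
    rw [smul_eq_C_mul, mul_one] at this
    exact this
  have h : degQ I 0 = Submodule.span ℂ {1} := by
    ext x
    rw [mem_degQ, Submodule.mem_span_singleton]
    constructor
    · rintro ⟨f, hf, rfl⟩
      rw [← mem_homogeneousSubmodule, homogeneousSubmodule_zero, Submodule.mem_one] at hf
      obtain ⟨c, rfl⟩ := hf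
      exact ⟨c, (hC c).symm⟩
    · rintro ⟨c, rfl⟩
      exact ⟨C c, isHomogeneous_C _ _, hC c⟩
  rw [h]
  have : Nontrivial (MPoly n ⧸ I) := Ideal.Quotient.nontrivial_iff.2 hI
  exact finrank_span_singleton one_ne_zero

/-! ### Saturation -/

theorem le_satIdeal {n : ℕ} (J : Ideal (MPoly n)) : J ≤ satIdeal J :=
  fun f hf => ⟨0, fun j => by simpa using hf⟩

theorem satIdeal_mono {n : ℕ} {J K : Ideal (MPoly n)} (h : J ≤ K) : satIdeal J ≤ satIdeal K := by
  rintro f ⟨k, hk⟩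
  exact ⟨k, fun j => h (hk j)⟩

theorem pow_mul_mem_of_le {n : ℕ} {J : Ideal (MPoly n)} {f : MPoly n} {k l : ℕ} (hkl : k ≤ l)
    (j : Fin n) (h : X j ^ k * f ∈ J) : X j ^ l * f ∈ J := by
  rw [← Nat.sub_add_cancel hkl, pow_add, mul_assoc]
  exact J.mul_mem_left _ h

theorem mem_satIdeal_of_forall {n : ℕ} {J : Ideal (MPoly n)} {f : MPoly n}
    (h : ∀ j, ∃ k : ℕ, X j ^ k * f ∈ J) : f ∈ satIdeal J := by
  choose k hk using h
  exact ⟨Finset.univ.sup k, fun j => pow_mul_mem_of_le (Finset.le_sup (Finset.mem_univ j)) j (hk j)⟩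

theorem satIdeal_satIdeal_sup {n : ℕ} (J K : Ideal (MPoly n)) :
    satIdeal (satIdeal J ⊔ K) = satIdeal (J ⊔ K) := by
  refine le_antisymm ?_ (satIdeal_mono (sup_le_sup_right (le_satIdeal J) K))
  rintro f ⟨k, hk⟩
  refine mem_satIdeal_of_forall fun j => ?_
  obtain ⟨g, ⟨l, hl⟩, h, hh, hgh⟩ := Submodule.mem_sup.1 (hk j)
  refine ⟨l + k, ?_⟩
  rw [pow_add, mul_assoc, ← hgh, mul_add]
  exact add_mem (Ideal.mem_sup_left (hl j)) (Ideal.mem_sup_right (K.mul_mem_left _ hh))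

theorem satIdeal_idem {n : ℕ} (J : Ideal (MPoly n)) : satIdeal (satIdeal J) = satIdeal J := by
  simpa using satIdeal_satIdeal_sup J ⊥

/-- If large powers of the variables multiply `g` into `J`, then modulo `J` every multiple of `g`
has a representative of bounded degree. -/
theorem exists_low_mul {n : ℕ} {J : Ideal (MPoly n)} {g : MPoly n} {K : ℕ}
    (hg : ∀ j, X j ^ K * g ∈ J) (a : MPoly n) :
    ∃ p : MPoly n, p.totalDegree ≤ n * K + g.totalDegree ∧ a * g - p ∈ J := by
  induction a using MvPolynomial.induction_on' with
  | monomial u c =>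
    by_cases hu : ∃ j, K ≤ u j
    · obtain ⟨j, hj⟩ := hu
      refine ⟨0, by simp, ?_⟩
      have : monomial u c = monomial (u - Finsupp.single j K) c * X j ^ K := by
        rw [X_pow_eq_monomial, monomial_mul, mul_one, tsub_add_cancel_of_le]
        simpa using hj
      rw [sub_zero, this, mul_assoc]
      exact J.mul_mem_left _ (hg j)
    · push Not at hu
      refine ⟨monomial u c * g, (totalDegree_mul _ _).trans ?_, by simp⟩
      gcongr
      refine (totalDegree_monomial_le _ _).trans ?_
      rw [Finsupp.sum_fintype _ _ (fun _ => rfl)]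
      refine (Finset.sum_le_sum fun j _ => (hu j).le).trans ?_
      simp
  | add p q hp hq =>
    obtain ⟨p', hp', hp''⟩ := hp
    obtain ⟨q', hq', hq''⟩ := hq
    refine ⟨p' + q', (totalDegree_add _ _).trans (max_le hp' hq'), ?_⟩
    have : (p + q) * g - (p' + q') = (p * g - p') + (q * g - q') := by ring
    rw [this]
    exact add_mem hp'' hq''

/-- A homogeneous ideal agrees with its saturation in all large degrees. -/
theorem exists_sat_tail {n : ℕ} {J : Ideal (MPoly n)} (hJ : IsHomogIdeal J) :
    ∃ T : ℕ, ∀ t, T ≤ t → ∀ f : MPoly n, f.IsHomogeneous t → f ∈ satIdeal J → f ∈ J := by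
  obtain ⟨S, hS⟩ := (inferInstance : IsNoetherianRing (MPoly n)).noetherian (satIdeal J)
  have hmem : ∀ g ∈ S, g ∈ satIdeal J := fun g hg => hS ▸ Submodule.subset_span hg
  have hex : ∀ g : MPoly n, ∃ T : ℕ, g ∈ S → ∀ a : MPoly n,
      ∃ p : MPoly n, p.totalDegree ≤ T ∧ a * g - p ∈ J := by
    intro g
    by_cases hg : g ∈ S
    · obtain ⟨K, hK⟩ := hmem g hg
      exact ⟨_, fun _ => exists_low_mul hK⟩
    · exact ⟨0, fun h => absurd h hg⟩
  choose T hT using hex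
  refine ⟨S.sup T + 1, fun t ht f hf hfJ => ?_⟩
  rw [← hS] at hfJ
  obtain ⟨a, -, rfl⟩ := Submodule.mem_span_finset.1 hfJ
  have hp : ∀ g, ∃ p : MPoly n, p.totalDegree ≤ S.sup T ∧ (g ∈ S → a g * g - p ∈ J) := by
    intro g
    by_cases hg : g ∈ S
    · obtain ⟨p, hp, hp'⟩ := hT g hg (a g)
      exact ⟨p, hp.trans (Finset.le_sup hg), fun _ => hp'⟩
    · exact ⟨0, by simp, fun h => absurd h hg⟩
  choose p hp hp' using hp
  have hlow : homogeneousComponent t (∑ g ∈ S, p g) = 0 := by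
    apply homogeneousComponent_eq_zero
    have := totalDegree_finsetSum_le (s := S) (f := p) (d := S.sup T) fun g _ => hp g
    exact lt_of_le_of_lt this (by omega)
  have hdiff : (∑ g ∈ S, a g • g) - ∑ g ∈ S, p g ∈ J := by
    rw [← Finset.sum_sub_distrib]
    exact sum_mem fun g hg => hp' g hg
  have := hJ _ hdiff t
  rwa [map_sub, hlow, sub_zero, homogeneousComponent_eq_self hf] at this

theorem exists_finrank_satIdeal_eq {n : ℕ} {J : Ideal (MPoly n)} (hJ : IsHomogIdeal J) :
    ∃ T : ℕ, ∀ t, T ≤ t →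
      Module.finrank ℂ (degQ (satIdeal J) t) = Module.finrank ℂ (degQ J t) := by
  obtain ⟨T, hT⟩ := exists_sat_tail hJ
  exact ⟨T, fun t ht => (degQ_eq_of_forall (le_satIdeal J) (hT t ht)).symm⟩

/-! ### Existence of good hyperplanes -/

/-- The coefficient vectors of the linear forms lying in the ideal `P`. -/
noncomputable def linIn {n : ℕ} (P : Ideal (MPoly n)) : Subspace ℂ (Fin n → ℂ) where
  carrier := {c | lin c ∈ P}
  zero_mem' := by simp [lin]
  add_mem' := by
    intro a b ha hb
    have : lin (a + b) = lin a + lin b := by simp [lin, add_mul, Finset.sum_add_distrib]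
    simpa [this] using add_mem ha hb
  smul_mem' := by
    intro c a ha
    have : lin (c • a) = C c * lin a := by simp [lin, Finset.mul_sum, mul_assoc]
    simpa [this] using P.mul_mem_left (C c) ha

theorem lin_single {n : ℕ} (j : Fin n) : lin (Pi.single j (1 : ℂ)) = X j := by
  rw [lin, Finset.sum_eq_single j]
  · simp
  · intro i _ hi
    simp [hi]
  · simp

/-- Some linear form is a nonzerodivisor modulo the saturation of `J` (it avoids the finitely many
associated primes, none of which is the irrelevant ideal), hence acts injectively on `R/J` in all
large degrees. -/
theorem exists_good_lin {n : ℕ} {J : Ideal (MPoly n)} (hJ : IsHomogIdeal J) :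
    ∃ c : Fin n → ℂ, ∃ T : ℕ, ∀ t, T ≤ t → ∀ f : MPoly n, f.IsHomogeneous t →
      lin c * f ∈ J → f ∈ J := by
  classical
  set M := MPoly n ⧸ satIdeal J
  have hfin : (associatedPrimes (MPoly n) M).Finite := associatedPrimes.finite _ _
  let s : Finset (Subspace ℂ (Fin n → ℂ)) := hfin.toFinset.image linIn
  have hs : ⊤ ∉ s := by
    intro h
    obtain ⟨P, hP, hPtop⟩ := Finset.mem_image.1 h
    rw [Set.Finite.mem_toFinset] at hP
    have hX : ∀ j, X j ∈ P := by
      intro j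
      have : Pi.single j (1 : ℂ) ∈ linIn P := hPtop ▸ Submodule.mem_top
      rw [← lin_single]
      exact this
    obtain ⟨hprime, x, hx⟩ := hP
    obtain ⟨f, rfl⟩ := Ideal.Quotient.mk_surjective x
    have hf : f ∈ satIdeal J := by
      rw [← satIdeal_idem]
      refine mem_satIdeal_of_forall fun j => ?_
      have hj := hX j
      rw [hx] at hj
      obtain ⟨k, hk⟩ := hj
      refine ⟨k, ?_⟩
      rw [Submodule.mem_colon_singleton, Submodule.mem_bot] at hk
      exact Ideal.Quotient.eq_zero_iff_mem.1 hk
    apply hprime.ne_top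
    rw [hx, Ideal.Quotient.eq_zero_iff_mem.2 hf]
    simp
  obtain ⟨c, hc⟩ := (Set.ne_univ_iff_exists_notMem _).1 (Subspace.biUnion_ne_univ_of_top_notMem hs)
  obtain ⟨T, hT⟩ := exists_sat_tail hJ
  refine ⟨c, T, fun t ht f hf hcf => hT t ht f hf ?_⟩
  have hreg : IsSMulRegular M (lin c) := by
    by_contra hnot
    have : lin c ∈ ⋃ p ∈ associatedPrimes (MPoly n) M, (p : Set (MPoly n)) := by
      rw [biUnion_associatedPrimes_eq_compl_regular]
      exact hnot
    simp only [Set.mem_iUnion] at this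
    obtain ⟨P, hP, hcP⟩ := this
    apply hc
    simp only [Set.mem_iUnion]
    exact ⟨linIn P, Finset.mem_image_of_mem _ (hfin.mem_toFinset.2 hP), hcP⟩
  have h0 : lin c • (Ideal.Quotient.mk (satIdeal J) f : M) = 0 :=
    Ideal.Quotient.eq_zero_iff_mem.2 (le_satIdeal J hcf)
  have := (isSMulRegular_iff_right_eq_zero_of_smul.1 hreg) _ h0
  exact Ideal.Quotient.eq_zero_iff_mem.1 this

/-! ### Semicontinuity -/

/-- Surjectivity is a Zariski-open condition in an affine-linear family of linear maps: compose
with a fixed right inverse at `c₀` and take the determinant. -/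
theorem exists_surjective_open {ι E V : Type*} [Fintype ι] [AddCommGroup E] [Module ℂ E]
    [AddCommGroup V] [Module ℂ V] [FiniteDimensional ℂ V] (T₀ : E →ₗ[ℂ] V) (T : ι → E →ₗ[ℂ] V)
    (c₀ : ι → ℂ) (h : Function.Surjective (T₀ + ∑ i, c₀ i • T i)) :
    ∃ Q : MvPolynomial ι ℂ, eval c₀ Q ≠ 0 ∧
      ∀ c : ι → ℂ, eval c Q ≠ 0 → Function.Surjective (T₀ + ∑ i, c i • T i) := by
  obtain ⟨S, hS⟩ := LinearMap.exists_rightInverse_of_surjective _ (LinearMap.range_eq_top.2 h)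
  let b := Module.finBasis ℂ V
  let M : Matrix _ _ (MvPolynomial ι ℂ) :=
    (LinearMap.toMatrix b b (T₀ ∘ₗ S)).map C
      + ∑ i, (X i : MvPolynomial ι ℂ) • (LinearMap.toMatrix b b (T i ∘ₗ S)).map C
  have hM : ∀ c : ι → ℂ, eval c M.det = LinearMap.det ((T₀ + ∑ i, c i • T i) ∘ₗ S) := by
    intro c
    rw [← LinearMap.det_toMatrix b, RingHom.map_det]
    congr 1
    ext p q
    simp [M, LinearMap.toMatrix_apply, Matrix.sum_apply, LinearMap.sum_apply]
  refine ⟨M.det, ?_, fun c hc => ?_⟩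
  · rw [hM, hS, LinearMap.det_id]
    exact one_ne_zero
  · rw [hM] at hc
    have hb := (LinearMap.equivOfDetNeZero _ hc).surjective
    exact Function.Surjective.of_comp (g := S) hb

/-- The ideal cutting out two successive (unsaturated) hyperplane sections of `V(J)`. -/
noncomputable abbrev twoSect {n : ℕ} (J : Ideal (MPoly n)) (c : Fin 2 × Fin n → ℂ) :
    Ideal (MPoly n) :=
  J ⊔ Ideal.span {lin fun j => c (0, j)} ⊔ Ideal.span {lin fun j => c (1, j)}

/-- Upper semicontinuity of the Hilbert function of a double section in a fixed degree. -/
theorem exists_semicontinuous {n : ℕ} {J : Ideal (MPoly n)} (hJ : IsHomogIdeal J) (d : ℕ)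
    (c₀ : Fin 2 × Fin n → ℂ) :
    ∃ Q : MvPolynomial (Fin 2 × Fin n) ℂ, eval c₀ Q ≠ 0 ∧ ∀ c, eval c Q ≠ 0 →
      Module.finrank ℂ (degQ (twoSect J c) (d + 1))
        ≤ Module.finrank ℂ (degQ (twoSect J c₀) (d + 1)) := by
  set e := Module.finrank ℂ (degQ (twoSect J c₀) (d + 1)) with he
  let V := homogeneousSubmodule (Fin n) ℂ (d + 1)
  let W := homogeneousSubmodule (Fin n) ℂ d
  let JV : Submodule ℂ (MPoly n) := J.restrictScalars ℂ ⊓ V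
  let b := Module.finBasis ℂ (degQ (twoSect J c₀) (d + 1))
  have hu : ∀ i, ∃ f : MPoly n, f.IsHomogeneous (d + 1) ∧
      Ideal.Quotient.mk (twoSect J c₀) f = (b i : MPoly n ⧸ twoSect J c₀) :=
    fun i => mem_degQ.1 (b i).2
  choose u hu hub using hu
  -- `u` lifts a basis of the degree `d + 1` part of the quotient at `c₀`; the map
  -- `(g, a, x) ↦ g + ∑ ℓ_t a_t + ∑ x_i u_i` is surjective at `c₀`.
  let mulX : Fin n → W →ₗ[ℂ] V := fun j => (LinearMap.mulLeft ℂ (X j : MPoly n)).restrict (by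
    intro f hf
    have := (isHomogeneous_X ℂ j).mul ((mem_homogeneousSubmodule _ _).1 hf)
    rw [add_comm] at this
    exact this)
  let T₀ : (JV × (Fin 2 → W) × (Fin e → ℂ)) →ₗ[ℂ] V :=
    (Submodule.inclusion (inf_le_right : JV ≤ V)) ∘ₗ LinearMap.fst ℂ _ _
      + (Fintype.linearCombination ℂ (fun i => (⟨u i, hu i⟩ : V)))
        ∘ₗ LinearMap.snd ℂ _ _ ∘ₗ LinearMap.snd ℂ _ _
  let T : Fin 2 × Fin n → (JV × (Fin 2 → W) × (Fin e → ℂ)) →ₗ[ℂ] V := fun p =>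
    mulX p.2 ∘ₗ LinearMap.proj p.1 ∘ₗ LinearMap.fst ℂ _ _ ∘ₗ LinearMap.snd ℂ _ _
  have hT : ∀ (c : Fin 2 × Fin n → ℂ) (g : JV) (a : Fin 2 → W) (x : Fin e → ℂ),
      (((T₀ + ∑ p, c p • T p) (g, a, x) : V) : MPoly n)
      = (g : MPoly n) + (∑ i, x i • u i) + ((lin fun j => c (0, j)) * (a 0 : MPoly n)
        + (lin fun j => c (1, j)) * (a 1 : MPoly n)) := by
    intro c g a x
    simp [T₀, T, mulX, Fintype.linearCombination_apply, LinearMap.sum_apply,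
      Fintype.sum_prod_type, Fin.sum_univ_two, lin, Finset.sum_mul, smul_eq_C_mul, mul_assoc]
    rfl
  have hsurj : Function.Surjective (T₀ + ∑ p, c₀ p • T p) := by
    rintro ⟨f, hf⟩
    let y : degQ (twoSect J c₀) (d + 1) := ⟨Ideal.Quotient.mk _ f, mem_degQ.2 ⟨f, hf, rfl⟩⟩
    let x := b.repr y
    have hmem : f - ∑ i, x i • u i ∈ twoSect J c₀ := by
      rw [← Ideal.Quotient.eq]
      have h1 : (y : MPoly n ⧸ twoSect J c₀) = ∑ i, x i • (b i : MPoly n ⧸ twoSect J c₀) := by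
        have h2 := congrArg (Submodule.subtype _) (b.sum_repr y)
        rw [map_sum] at h2
        exact h2.symm
      change (y : MPoly n ⧸ twoSect J c₀) = _
      rw [h1, map_sum]
      refine Finset.sum_congr rfl fun i _ => ?_
      rw [← hub]
      rfl
    have hhom : (f - ∑ i, x i • u i).IsHomogeneous (d + 1) :=
      V.sub_mem hf (V.sum_mem fun i _ => V.smul_mem _ (hu i))
    obtain ⟨p, hp, hph, a₁, ha₁, h1⟩ := exists_decomp
      (hJ.sup_span (lin_isHomogeneous _)) (lin_isHomogeneous _) hhom hmem
    obtain ⟨g, hg, hgh, a₀, ha₀, rfl⟩ := exists_decomp hJ (lin_isHomogeneous _) hph hp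
    refine ⟨(⟨g, hg, hgh⟩, ![⟨a₀, ha₀⟩, ⟨a₁, ha₁⟩], x), Subtype.ext ?_⟩
    rw [hT]
    simp only [Matrix.cons_val_zero, Matrix.cons_val_one]
    linear_combination -h1
  obtain ⟨Q, hQ₀, hQ⟩ := exists_surjective_open T₀ T c₀ hsurj
  refine ⟨Q, hQ₀, fun c hc => ?_⟩
  have hspan : degQ (twoSect J c) (d + 1) ≤
      Submodule.span ℂ (Set.range fun i => Ideal.Quotient.mk (twoSect J c) (u i)) := by
    intro y hy
    obtain ⟨f, hf, rfl⟩ := mem_degQ.1 hy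
    obtain ⟨⟨g, a, x⟩, hgax⟩ := hQ c hc ⟨f, hf⟩
    have h1 : _ = f := congrArg Subtype.val hgax
    rw [hT] at h1
    have h2 : Ideal.Quotient.mk (twoSect J c) f
        = ∑ i, x i • Ideal.Quotient.mk (twoSect J c) (u i) := by
      have h3 : ∑ i, x i • Ideal.Quotient.mk (twoSect J c) (u i)
          = Ideal.Quotient.mk (twoSect J c) (∑ i, x i • u i) := by
        rw [map_sum]; rfl
      rw [h3, Ideal.Quotient.eq, ← h1]
      have h4 : ∀ v w z : MPoly n, v + w + z - w = v + z := fun v w z => by ring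
      rw [h4]
      refine add_mem ?_ (add_mem ?_ ?_)
      · exact Ideal.mem_sup_left (Ideal.mem_sup_left g.2.1)
      · exact Ideal.mul_mem_right _ _
          (Ideal.mem_sup_left (Ideal.mem_sup_right (Ideal.mem_span_singleton_self _)))
      · exact Ideal.mul_mem_right _ _ (Ideal.mem_sup_right (Ideal.mem_span_singleton_self _))
    rw [h2]
    exact Submodule.sum_mem _ fun i _ => Submodule.smul_mem _ _ (Submodule.subset_span ⟨i, rfl⟩)
  have hfin : FiniteDimensional ℂ
      (Submodule.span ℂ (Set.range fun i => Ideal.Quotient.mk (twoSect J c) (u i))) :=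
    FiniteDimensional.span_of_finite ℂ (Set.finite_range _)
  refine (Submodule.finrank_mono hspan).trans ?_
  refine (finrank_range_le_card _).trans ?_
  simp [he]

/-! ### The numerical identity -/

/-- Summation by parts, with `a`, `b`, `h` the Hilbert functions of the surface, of its
hyperplane section and of the points. -/
theorem numeric_identity (s π pa : ℤ) (a b h : ℤ → ℤ) (N : ℤ) (ha0 : a 0 = 1)
    (ha : ∀ t, N ≤ t → a t = s * (t * (t + 1) / 2) + (1 - π) * t + 1 + pa)
    (hb : ∀ t, N ≤ t → b t = a t - a (t - 1)) (hh : ∀ t, N ≤ t → h t = s) :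
    pa = (∑ᶠ i ∈ Set.Ici (1 : ℤ), (i - 1) * (s - h i))
        - (∑ᶠ i ∈ Set.Ici (1 : ℤ), (i - 1) * ((b i - b (i - 1)) - h i))
        + (∑ᶠ i ∈ Set.Ici (1 : ℤ), ((a i - a (i - 1)) - b i)) := by
  have hbt : ∀ t, N + 1 ≤ t → b t = s * t + (1 - π) := by
    intro t ht
    rw [hb t (by omega), ha t (by omega), ha (t - 1) (by omega)]
    have h1 : t * (t + 1) / 2 = (t - 1) * (t - 1 + 1) / 2 + t := by
      rw [← Int.add_mul_ediv_right _ _ (by norm_num : (2 : ℤ) ≠ 0)]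
      congr 1
      ring
    rw [h1]
    ring
  obtain ⟨m, hm⟩ : ∃ m : ℕ, N + 2 ≤ (m : ℤ) := ⟨(N + 2).toNat, Int.self_le_toNat _⟩
  have hsum : ∀ f : ℤ → ℤ, (∀ t, N + 2 ≤ t → f t = 0) →
      ∑ᶠ i ∈ Set.Ici (1 : ℤ), f i = ∑ k ∈ Finset.range m, f ((k : ℤ) + 1) := by
    intro f hf
    rw [finsum_mem_eq_sum_of_subset (t := (Finset.range m).image fun k : ℕ => (k : ℤ) + 1)]
    · rw [Finset.sum_image]
      intro x _ y _ hxy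
      simpa using hxy
    · rintro t ⟨ht, hft⟩
      have h1 : t < N + 2 := by
        by_contra hlt
        exact hft (hf t (by omega))
      have h2 : (1 : ℤ) ≤ t := ht
      simp only [Finset.coe_image, Set.mem_image, Finset.mem_coe, Finset.mem_range]
      exact ⟨(t - 1).toNat, by omega, by omega⟩
    · intro t ht
      simp only [Finset.coe_image, Set.mem_image] at ht
      obtain ⟨k, -, rfl⟩ := ht
      simp
  rw [hsum, hsum, hsum, ← Finset.sum_sub_distrib, ← Finset.sum_add_distrib]
  · have key : ∀ k : ℕ, ∑ i ∈ Finset.range k,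
        (((i : ℤ) + 1 - 1) * (s - h ((i : ℤ) + 1))
          - ((i : ℤ) + 1 - 1) * (b ((i : ℤ) + 1) - b ((i : ℤ) + 1 - 1) - h ((i : ℤ) + 1))
          + (a ((i : ℤ) + 1) - a ((i : ℤ) + 1 - 1) - b ((i : ℤ) + 1)))
        = s * ((k : ℤ) * ((k : ℤ) + 1) / 2) - s * k - k * b k + a k - a 0 := by
      intro k
      induction k with
      | zero => simp
      | succ k ih =>
        rw [Finset.sum_range_succ, ih]
        have h1 : ((k : ℤ) + 1) * ((k : ℤ) + 1 + 1) / 2 = (k : ℤ) * (k + 1) / 2 + (k + 1) := by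
          rw [← Int.add_mul_ediv_right _ _ (by norm_num : (2 : ℤ) ≠ 0)]
          congr 1
          ring
        push_cast
        rw [h1, add_sub_cancel_right]
        ring
    rw [key, ha m (by omega), hbt m (by omega), ha0]
    have h2 : s * ((m : ℤ) * (m + 1) / 2) * 2 = s * (m * (m + 1)) := by
      rw [mul_assoc, Int.ediv_mul_cancel (Int.even_mul_succ_self (m : ℤ)).two_dvd]
    linarith
  · intro t ht
    rw [hb t (by omega)]
    ring
  · intro t ht
    rw [hh t (by omega), hbt t (by omega), hbt (t - 1) (by omega)]
    ring
  · intro t ht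
    rw [hh t (by omega)]
    ring

/-! ### General double hyperplane sections -/

theorem finrank_degQ_succ_eq_zero {n : ℕ} {I : Ideal (MPoly n)} {k : ℕ}
    (h : Module.finrank ℂ (degQ I k) = 0) : Module.finrank ℂ (degQ I (k + 1)) = 0 := by
  have hk : ∀ f : MPoly n, f.IsHomogeneous k → f ∈ I := by
    intro f hf
    have h0 : degQ I k = ⊥ := Submodule.finrank_eq_zero.1 h
    have h1 : Ideal.Quotient.mk I f ∈ degQ I k := mem_degQ.2 ⟨f, hf, rfl⟩
    rw [h0, Submodule.mem_bot] at h1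
    exact Ideal.Quotient.eq_zero_iff_mem.1 h1
  rw [Submodule.finrank_eq_zero, eq_bot_iff]
  intro x hx
  obtain ⟨f, hf, rfl⟩ := mem_degQ.1 hx
  rw [Submodule.mem_bot, Ideal.Quotient.eq_zero_iff_mem, f.as_sum]
  refine sum_mem fun u hu => ?_
  have hdeg : u.degree = k + 1 := by
    rw [Finsupp.degree_eq_weight_one]
    exact hf (mem_support_iff.1 hu)
  have hj : ∃ j, u j ≠ 0 := by
    by_contra hall
    push Not at hall
    have : u = 0 := Finsupp.ext hall
    simp [this] at hdeg
  obtain ⟨j, hj⟩ := hj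
  have hle : Finsupp.single j 1 ≤ u := by
    simpa using Nat.one_le_iff_ne_zero.2 hj
  have hmon : monomial u (coeff u f) = X j * monomial (u - Finsupp.single j 1) (coeff u f) := by
    rw [X, monomial_mul, one_mul, add_tsub_cancel_of_le hle]
  rw [hmon]
  refine I.mul_mem_left _ (hk _ (isHomogeneous_monomial _ ?_))
  have h2 : (Finsupp.single j 1 + (u - Finsupp.single j 1)).degree = k + 1 := by
    rw [add_tsub_cancel_of_le hle, hdeg]
  rw [map_add, Finsupp.degree_single] at h2
  omega

theorem twoSect_sup_comm {n : ℕ} (J K : Ideal (MPoly n)) (c : Fin 2 × Fin n → ℂ) :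
    twoSect (J ⊔ K) c = twoSect J c ⊔ K := by
  simp only [twoSect]
  ac_rfl

/-- If the second difference of the Hilbert function of `J` is eventually `s`, then the general
double section of `V(J)` has eventual Hilbert function `s`, provided the first linear form acts
injectively on `R/J` in large degrees (expressed through Hilbert functions).  The bound `≤ s` in
one large degree holds on an open set by semicontinuity and propagates to higher degrees since a
third hyperplane misses the section; the bound `≥ s` is automatic. -/
theorem exists_generic_twoSect {n : ℕ} {J : Ideal (MPoly n)} (hJ : IsHomogIdeal J) (s : ℤ)
    (N : ℕ) (hs : ∀ k : ℕ, N ≤ k → (Module.finrank ℂ (degQ J (k + 1 + 1)) : ℤ)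
      - 2 * Module.finrank ℂ (degQ J (k + 1)) + Module.finrank ℂ (degQ J k) = s) :
    ∃ Q : MvPolynomial (Fin 2 × Fin n) ℂ, Q ≠ 0 ∧ ∀ c, eval c Q ≠ 0 →
      (∃ T : ℕ, ∀ k : ℕ, T ≤ k → (Module.finrank ℂ (degQ J (k + 1)) : ℤ) =
        Module.finrank ℂ (degQ (J ⊔ Ideal.span {lin fun j => c (0, j)}) (k + 1))
          + Module.finrank ℂ (degQ J k)) →
      ∃ T : ℕ, ∀ k : ℕ, T ≤ k → (Module.finrank ℂ (degQ (twoSect J c) k) : ℤ) = s := by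
  obtain ⟨v₀, T₀, h₀⟩ := exists_good_lin hJ
  have hJ₁ := hJ.sup_span (lin_isHomogeneous v₀)
  obtain ⟨v₁, T₁, h₁⟩ := exists_good_lin hJ₁
  have hJ₂ := hJ₁.sup_span (lin_isHomogeneous v₁)
  obtain ⟨v₂, T₂, h₂⟩ := exists_good_lin hJ₂
  let c₀ : Fin 2 × Fin n → ℂ := fun p => if p.1 = 0 then v₀ p.2 else v₁ p.2
  have hc₀ : twoSect J c₀ = J ⊔ Ideal.span {lin v₀} ⊔ Ideal.span {lin v₁} := by
    simp [twoSect, c₀]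
  have e₀ := fun k (hk : T₀ ≤ k) => (finrank_sup_span hJ (lin_isHomogeneous v₀) k).2 (h₀ k hk)
  have e₁ := fun k (hk : T₁ ≤ k) => (finrank_sup_span hJ₁ (lin_isHomogeneous v₁) k).2 (h₁ k hk)
  have e₂ := fun k (hk : T₂ ≤ k) => (finrank_sup_span hJ₂ (lin_isHomogeneous v₂) k).2 (h₂ k hk)
  have hval : ∀ k, N + T₀ + T₁ ≤ k → (Module.finrank ℂ (degQ (twoSect J c₀) (k + 2)) : ℤ) = s := by
    intro k hk
    have := hs k (by omega)
    have := e₀ k (by omega)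
    have := e₀ (k + 1) (by omega)
    have := e₁ (k + 1) (by omega)
    rw [hc₀]
    change (Module.finrank ℂ (degQ (J ⊔ Ideal.span {lin v₀} ⊔ Ideal.span {lin v₁}) (k + 1 + 1)) : ℤ)
      = s
    omega
  let D := N + T₀ + T₁ + T₂ + 2
  have hD : (Module.finrank ℂ (degQ (twoSect J c₀) (D + 1)) : ℤ) = s :=
    hval (N + T₀ + T₁ + T₂ + 1) (by omega)
  have hD₃ : Module.finrank ℂ (degQ (twoSect (J ⊔ Ideal.span {lin v₂}) c₀) (D + 1)) = 0 := by
    have h3 := hval (N + T₀ + T₁ + T₂) (by omega)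
    have h4 := e₂ D (by omega)
    rw [← hc₀] at h4
    change (Module.finrank ℂ (degQ (twoSect J c₀) D) : ℤ) = s at h3
    rw [twoSect_sup_comm]
    omega
  obtain ⟨Q₁, hQ₁, hQ₁'⟩ := exists_semicontinuous hJ D c₀
  obtain ⟨Q₂, hQ₂, hQ₂'⟩ :=
    exists_semicontinuous (hJ.sup_span (lin_isHomogeneous v₂)) D c₀
  refine ⟨Q₁ * Q₂, ?_, fun c hc ⟨T, hT⟩ => ?_⟩
  · intro h
    have : eval c₀ (Q₁ * Q₂) = 0 := by rw [h, map_zero]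
    rw [map_mul] at this
    exact mul_ne_zero hQ₁ hQ₂ this
  rw [map_mul] at hc
  have hle := hQ₁' c (left_ne_zero_of_mul hc)
  have hzero := hQ₂' c (right_ne_zero_of_mul hc)
  rw [hD₃, twoSect_sup_comm] at hzero
  have hJc₁ : IsHomogIdeal (J ⊔ Ideal.span {lin fun j => c (0, j)}) :=
    hJ.sup_span (lin_isHomogeneous _)
  have hJc₂ : IsHomogIdeal (twoSect J c) := hJc₁.sup_span (lin_isHomogeneous _)
  have hz : ∀ k, Module.finrank ℂ (degQ (twoSect J c ⊔ Ideal.span {lin v₂}) (D + 1 + k)) = 0 := by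
    intro k
    induction k with
    | zero => simpa using hzero
    | succ k ih => exact finrank_degQ_succ_eq_zero ih
  have hupper : ∀ k, (Module.finrank ℂ (degQ (twoSect J c) (D + 1 + k)) : ℤ) ≤ s := by
    intro k
    induction k with
    | zero => rw [← hD]; exact_mod_cast hle
    | succ k ih =>
      have h5 := (finrank_sup_span hJc₂ (lin_isHomogeneous v₂) (D + 1 + k)).1
      have h6 : Module.finrank ℂ (degQ (twoSect J c ⊔ Ideal.span {lin v₂}) (D + 1 + k + 1)) = 0 :=
        hz (k + 1)
      change (Module.finrank ℂ (degQ (twoSect J c) (D + 1 + k + 1)) : ℤ) ≤ s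
      omega
  refine ⟨D + 3 + T, fun k hk => le_antisymm ?_ ?_⟩
  · obtain ⟨l, rfl⟩ := Nat.exists_eq_add_of_le (show D + 1 ≤ k by omega)
    exact hupper l
  · obtain ⟨l, rfl⟩ := Nat.exists_eq_add_of_le (show 2 ≤ k by omega)
    rw [add_comm 2 l]
    have h7 := (finrank_sup_span hJc₁ (lin_isHomogeneous fun j => c (1, j)) (l + 1)).1
    have := hT l (by omega)
    have := hT (l + 1) (by omega)
    have := hs l (by omega)
    change s ≤ (Module.finrank ℂ (degQ (J ⊔ Ideal.span {lin fun j => c (0, j)}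
      ⊔ Ideal.span {lin fun j => c (1, j)}) (l + 1 + 1)) : ℤ)
    omega

/-- Lemma 3.4, first formula.  Let `S ⊆ ℙ^r` be an integral nondegenerate
surface of degree `s` and arithmetic genus `p_a(S)`, with general hyperplane section `Σ`, and
let `H` be the general hyperplane section of `Σ`.  With `δ_i = Δh_Σ(i) - h_H(i)` and
`μ_i = Δh_S(i) - h_Σ(i)`, one has
`p_a(S) = ∑_{i≥1} (i-1)(s - h_H(i)) - ∑_{i≥1} (i-1)δ_i + ∑_{i≥1} μ_i`. -/
theorem statement_12 (r : ℕ) (s π pa : ℤ)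
    (IS : Ideal (MPoly (r + 1)))
    (hsurf : IsSurface IS) (hnd : Nondeg IS) (hsinv : SurfInv IS s π pa) :
    GenericForms (r + 1) 2 fun L =>
      pa = (∑ᶠ i ∈ Set.Ici (1 : ℤ),
              (i - 1) * (s - hilbZ (sect (sect IS (L 0)) (L 1)) i))
        - (∑ᶠ i ∈ Set.Ici (1 : ℤ),
              (i - 1) * ((hilbZ (sect IS (L 0)) i - hilbZ (sect IS (L 0)) (i - 1))
                - hilbZ (sect (sect IS (L 0)) (L 1)) i))
        + (∑ᶠ i ∈ Set.Ici (1 : ℤ),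
              ((hilbZ IS i - hilbZ IS (i - 1)) - hilbZ (sect IS (L 0)) i)) := by
  obtain ⟨hhom, hprime, -⟩ := hsurf
  obtain ⟨N, hN⟩ := hsinv
  have hZ : ∀ (I : Ideal (MPoly (r + 1))) (k : ℕ),
      hilbZ I (k : ℤ) = (Module.finrank ℂ (degQ I k) : ℤ) := fun I k => by
    rw [hilbZ, hilbNat_natCast]
  have hdiff2 : ∀ k : ℕ, N.toNat ≤ k → (Module.finrank ℂ (degQ IS (k + 2)) : ℤ)
      - 2 * Module.finrank ℂ (degQ IS (k + 1)) + Module.finrank ℂ (degQ IS k) = s := by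
    intro k hk
    have ht : ∀ t : ℤ, (t + 1) * (t + 1 + 1) / 2 = t * (t + 1) / 2 + (t + 1) := by
      intro t
      rw [← Int.add_mul_ediv_right _ _ (by norm_num : (2 : ℤ) ≠ 0)]
      congr 1
      ring
    have hk' : N ≤ (k : ℤ) := by omega
    rw [← hZ, ← hZ, ← hZ, hN _ hk', hN _ (by push_cast; omega), hN _ (by push_cast; omega)]
    have e1 := ht k
    have e2 := ht (k + 1)
    push_cast
    rw [show (k : ℤ) + 2 = k + 1 + 1 by ring, e2, e1]
    ring
  obtain ⟨Q, hQ, hQ'⟩ := exists_generic_twoSect hhom s N.toNat hdiff2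
  -- The factor `X (0, 0)` forces the first linear form to be nonzero, hence outside `IS`.
  refine ⟨X (0, 0) * Q, mul_ne_zero (X_ne_zero _) hQ, fun c hc => ?_⟩
  rw [map_mul, eval_X] at hc
  have hc0 : c 0 0 ≠ 0 := left_ne_zero_of_mul hc
  have hℓ : lin (c 0) ∉ IS := by
    intro hmem
    have h0 := hnd _ ((mem_homogeneousSubmodule _ _).2 (lin_isHomogeneous (c 0))) hmem
    apply hc0
    have h1 : eval (Pi.single 0 1) (lin (c 0)) = c 0 0 := by
      simp [lin, Pi.single_apply]
    rw [← h1, h0, map_zero]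
  have hfirst : ∀ k : ℕ, Module.finrank ℂ (degQ IS (k + 1)) =
      Module.finrank ℂ (degQ (IS ⊔ Ideal.span {lin (c 0)}) (k + 1))
        + Module.finrank ℂ (degQ IS k) := fun k =>
    (finrank_sup_span hhom (lin_isHomogeneous (c 0)) k).2 fun f _ hf =>
      (hprime.mem_or_mem hf).resolve_left hℓ
  obtain ⟨T, hT⟩ := hQ' (fun p => c p.1 p.2) (right_ne_zero_of_mul hc)
    ⟨0, fun k _ => by exact_mod_cast hfirst k⟩
  have hJ₁ : IsHomogIdeal (IS ⊔ Ideal.span {lin (c 0)}) := hhom.sup_span (lin_isHomogeneous _)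
  have hJ₂ : IsHomogIdeal (IS ⊔ Ideal.span {lin (c 0)} ⊔ Ideal.span {lin (c 1)}) :=
    hJ₁.sup_span (lin_isHomogeneous _)
  obtain ⟨T₁, hT₁⟩ := exists_finrank_satIdeal_eq hJ₁
  obtain ⟨T₂, hT₂⟩ := exists_finrank_satIdeal_eq hJ₂
  change pa = (∑ᶠ i ∈ Set.Ici (1 : ℤ),
              (i - 1) * (s - hilbZ (sect (sect IS (lin (c 0))) (lin (c 1))) i))
        - (∑ᶠ i ∈ Set.Ici (1 : ℤ),
              (i - 1) * ((hilbZ (sect IS (lin (c 0))) i - hilbZ (sect IS (lin (c 0))) (i - 1))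
                - hilbZ (sect (sect IS (lin (c 0))) (lin (c 1))) i))
        + (∑ᶠ i ∈ Set.Ici (1 : ℤ),
              ((hilbZ IS i - hilbZ IS (i - 1)) - hilbZ (sect IS (lin (c 0))) i))
  refine numeric_identity s π pa _ _ _ (max N (T + T₁ + T₂ + 1 : ℕ)) ?_ ?_ ?_ ?_
  · have := hZ IS 0
    rw [finrank_degQ_zero hprime.ne_top] at this
    exact_mod_cast this
  · exact fun t ht => hN t (le_trans (le_max_left _ _) ht)
  · intro t ht
    have ht' := le_trans (le_max_right _ _) ht
    obtain ⟨k, rfl⟩ : ∃ k : ℕ, t = ((k + 1 : ℕ) : ℤ) := ⟨(t - 1).toNat, by omega⟩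
    rw [show ((k + 1 : ℕ) : ℤ) - 1 = (k : ℤ) by push_cast; ring, hZ, hZ, hZ]
    have h1 := hT₁ (k + 1) (by omega)
    have h2 := hfirst k
    rw [sect]
    omega
  · intro t ht
    have ht' := le_trans (le_max_right _ _) ht
    obtain ⟨k, rfl⟩ : ∃ k : ℕ, t = (k : ℤ) := ⟨t.toNat, by omega⟩
    rw [hZ, sect, sect, satIdeal_satIdeal_sup, hT₂ k (by omega)]
    exact hT k (by omega)
end
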